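/- Let M ∈ {0,1}^{m×n} be the adjacency matrix of a bipartite graph such that every subset S' ⊆ [n] with |S'| ≤ 2k satisfies |N(S')| ≥ d(1−ε)|S'| and every left vertex has degree at most d(1+ε), where ε ∈ (0,1/5). Then for any x ∈ ℝⁿ with Mx = 0 and any subset S ⊆ [n] with |S| ≤ k, ‖x_S‖₁ ≤ (4ε/(1−5ε))·‖x‖₁. -/

import Mathlib

open Matrix
open scoped Classical

/-!
View the graph through the neighbourhoods `N i` of its left vertices, with degrees at most `D` and
expansion factor `c`. It is enough to treat a set `S` of coordinates of largest norm.

* For a right vertex `y` the sum of the `x i` over the neighbours `i ∈ S` of `y` has norm at least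
  twice the largest `‖x i‖` minus their sum. The sets `{y | t < maxᵢ ‖x i‖}` are the neighbourhoods
  of the superlevel sets of `‖x ·‖`, so expansion integrated over `t` gives
  `‖M x_S‖₁ ≥ (2c - D) ‖x_S‖₁`.
* At most `(D - c) (|S| + 2 |T|)` edges run from `T ⊆ Sᶜ` to the neighbourhood of `S`: cut `T` into
  pieces `A` with `|A| ≤ |S|` and use the expansion of each `S ∪ A`. Superlevel sets that
  leave `S` contain `S`, so integrating over them bounds the contribution of `x_{Sᶜ}` on that
  neighbourhood by `(D - c) (‖x_S‖₁ + 2 ‖x_{Sᶜ}‖₁)`.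

On the kernel both contributions have the same size, whence `c ‖x_S‖₁ ≤ 2 (D - c) ‖x‖₁`. For
`c = d (1 - ε)` and `D = d (1 + ε)` the constant is `4 ε / (1 - ε) ≤ 4 ε / (1 - 5 ε)`.
-/

section

open Finset
open scoped NNReal

variable {ι κ V E R : Type*}

section LayerCake

open MeasureTheory Set

theorem integrableOn_sum_superlevel (s : Finset ι) (u : ι → ℝ) (a : ι → ℝ≥0) :
    IntegrableOn (fun t : ℝ ↦ ∑ i ∈ s with t < a i, u i) (Ioi 0) := by
  simp only [Finset.sum_filter]
  refine integrable_finsetSum s fun i _ ↦ ?_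
  have h_indicator : (fun t : ℝ ↦ if t < a i then u i else 0) =
      (Iio (a i : ℝ)).indicator fun _ ↦ u i := rfl
  rw [h_indicator, integrable_indicator_iff measurableSet_Iio, IntegrableOn,
    Measure.restrict_restrict measurableSet_Iio, Iio_inter_Ioi]
  exact integrableOn_const measure_Ioo_lt_top.ne

theorem sum_mul_eq_integral_sum_superlevel (s : Finset ι) (u : ι → ℝ) (a : ι → ℝ≥0) :
    ∑ i ∈ s, u i * a i = ∫ t in Ioi (0 : ℝ), ∑ i ∈ s with t < a i, u i := by
  have h_single (i : ι) : ∫ t in Ioi (0 : ℝ), (if t < a i then u i else 0) = u i * a i := by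
    have h_indicator : (fun t : ℝ ↦ if t < a i then u i else 0) =
        (Iio (a i : ℝ)).indicator fun _ ↦ u i := rfl
    rw [h_indicator, integral_indicator measurableSet_Iio,
      Measure.restrict_restrict measurableSet_Iio, Iio_inter_Ioi, setIntegral_const]
    simp [mul_comm]
  simp only [Finset.sum_filter]
  rw [integral_finsetSum]
  · simp only [h_single]
  · intro i _
    simpa [IntegrableOn, Finset.sum_filter] using integrableOn_sum_superlevel {i} u a

theorem sum_mul_le_sum_mul_of_superlevel {s : Finset ι} {t : Finset κ} {u : ι → ℝ} {v : κ → ℝ}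
    {a : ι → ℝ≥0} {b : κ → ℝ≥0}
    (h : ∀ r : ℝ≥0, ∑ i ∈ s with r < a i, u i ≤ ∑ j ∈ t with r < b j, v j) :
    ∑ i ∈ s, u i * a i ≤ ∑ j ∈ t, v j * b j := by
  rw [sum_mul_eq_integral_sum_superlevel, sum_mul_eq_integral_sum_superlevel]
  refine setIntegral_mono_on (integrableOn_sum_superlevel s u a) (integrableOn_sum_superlevel t v b)
    measurableSet_Ioi fun r hr ↦ ?_
  lift r to ℝ≥0 using (mem_Ioi.1 hr).le
  simpa only [NNReal.coe_lt_coe] using h r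

end LayerCake

theorem sum_mul_le_of_forall_subset_sum_le {S T : Finset ι} {a : ι → ℝ≥0} {e : ι → ℝ} {p q : ℝ}
    (hp : 0 ≤ p) (ha : ∀ i ∈ S, ∀ j ∈ T, a j ≤ a i)
    (he : ∀ T' ⊆ T, ∑ i ∈ T', e i ≤ p * #S + q * #T') :
    ∑ i ∈ T, e i * a i ≤ p * ∑ i ∈ S, (a i : ℝ) + q * ∑ i ∈ T, (a i : ℝ) := by
  suffices h : ∑ i ∈ T, (e i - q) * a i ≤ ∑ i ∈ S, p * a i by
    simp only [sub_mul, sum_sub_distrib, ← mul_sum] at h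
    linarith
  refine sum_mul_le_sum_mul_of_superlevel fun r ↦ ?_
  rcases (T.filter (r < a ·)).eq_empty_or_nonempty with h_empty | ⟨j, hj⟩
  · rw [h_empty, sum_empty]
    exact sum_nonneg fun _ _ ↦ hp
  · obtain ⟨hjT, hrj⟩ := mem_filter.1 hj
    have hS : S.filter (r < a ·) = S := filter_true_of_mem fun i hi ↦ hrj.trans_le (ha i hi j hjT)
    have h := he _ (T.filter_subset (r < a ·))
    rw [hS, sum_sub_distrib, sum_const, sum_const, nsmul_eq_mul, nsmul_eq_mul]
    linarith

theorem exists_card_eq_sum_le_forall_le [Finite ι] {A : Type*} [AddCommMonoid A] [LinearOrder A]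
    [IsOrderedCancelAddMonoid A] (a : ι → A) (S : Finset ι) :
    ∃ T : Finset ι, #T = #S ∧ ∑ i ∈ S, a i ≤ ∑ i ∈ T, a i ∧ ∀ i ∈ T, ∀ j ∉ T, a j ≤ a i := by
  cases nonempty_fintype ι
  obtain ⟨T, hT, hmax⟩ := (powersetCard #S univ).exists_max_image (fun T ↦ ∑ i ∈ T, a i)
    ⟨S, mem_powersetCard_univ.2 rfl⟩
  rw [mem_powersetCard_univ] at hT
  refine ⟨T, hT, hmax S (mem_powersetCard_univ.2 rfl), fun i hi j hj ↦ ?_⟩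
  have hj' : j ∉ T.erase i := fun h ↦ hj (mem_of_mem_erase h)
  have h_swap := hmax (insert j (T.erase i)) <| mem_powersetCard_univ.2 <| by
    rw [card_insert_of_notMem hj', card_erase_add_one hi, hT]
  rw [sum_insert hj', ← add_sum_erase T a hi] at h_swap
  exact le_of_add_le_add_right h_swap

section Neighborhoods

variable [DecidableEq V] (N : ι → Finset V)

theorem sum_sum_filter_mem_eq_sum_card_inter_mul [NonAssocSemiring R] (T : Finset ι) (U : Finset V)
    (f : ι → R) : ∑ y ∈ U, ∑ i ∈ T with y ∈ N i, f i = ∑ i ∈ T, (#(N i ∩ U) : R) * f i := by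
  simp only [sum_filter]
  rw [sum_comm]
  refine sum_congr rfl fun i _ ↦ ?_
  rw [← sum_filter, sum_const, nsmul_eq_mul, filter_mem_eq_inter, inter_comm U]

theorem sum_card_inter_add_card_union_biUnion_le (U : Finset V) (T : Finset ι) :
    ∑ i ∈ T, #(N i ∩ U) + #(U ∪ T.biUnion N) ≤ #U + ∑ i ∈ T, #(N i) := by
  have h_split : ∑ i ∈ T, #(N i \ U) + ∑ i ∈ T, #(N i ∩ U) = ∑ i ∈ T, #(N i) := by
    rw [← sum_add_distrib]
    exact sum_congr rfl fun i _ ↦ card_sdiff_add_card_inter (N i) U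
  have h_union : #(U ∪ T.biUnion N) ≤ #U + ∑ i ∈ T, #(N i \ U) := by
    have h_sdiff : U ∪ T.biUnion N = U ∪ T.biUnion fun i ↦ N i \ U := by
      ext y
      simp only [mem_union, mem_biUnion, mem_sdiff]
      grind
    rw [h_sdiff]
    exact (card_union_le _ _).trans (Nat.add_le_add_left card_biUnion_le _)
  lia

/-- The bipartite graph in which the left vertex `i` has the neighbourhood `N i` expands every set
of at most `K` left vertices by the factor `c`. The right vertices form an arbitrary type `V`, and
`c` is the number of neighbours per left vertex, not a fraction of the degree. -/
def IsVertexExpander (K : ℕ) (c : ℝ) : Prop :=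
  ∀ T : Finset ι, #T ≤ K → c * #T ≤ #(T.biUnion N)

end Neighborhoods

section Norm

variable [SeminormedAddCommGroup E]

theorem two_mul_norm_le_norm_sum_add_sum_norm {s : Finset ι} {j : ι} (hj : j ∈ s) (x : ι → E) :
    2 * ‖x j‖ ≤ ‖∑ i ∈ s, x i‖ + ∑ i ∈ s, ‖x i‖ := by
  have h_isolate : ‖x j‖ ≤ ‖∑ i ∈ s, x i‖ + ‖∑ i ∈ s.erase j, x i‖ := by
    rw [← add_sum_erase s x hj]
    simpa using norm_sub_le (x j + ∑ i ∈ s.erase j, x i) (∑ i ∈ s.erase j, x i)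
  have h_rest := norm_sum_le (s.erase j) x
  rw [← add_sum_erase s (‖x ·‖) hj]
  linarith

theorem two_mul_sup_nnnorm_le_norm_sum_add_sum_norm (s : Finset ι) (x : ι → E) :
    2 * ((s.sup fun i ↦ ‖x i‖₊ : ℝ≥0) : ℝ) ≤ ‖∑ i ∈ s, x i‖ + ∑ i ∈ s, ‖x i‖ := by
  rcases s.eq_empty_or_nonempty with rfl | hs
  · simp
  · obtain ⟨j, hj, h_sup⟩ := s.exists_mem_eq_sup hs fun i ↦ ‖x i‖₊
    rw [h_sup, coe_nnnorm]
    exact two_mul_norm_le_norm_sum_add_sum_norm hj x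

end Norm

namespace IsVertexExpander

variable [DecidableEq V] {N : ι → Finset V} {K k : ℕ} {c D : ℝ} {S T : Finset ι}

theorem mul_sum_le_sum_sup (hN : IsVertexExpander N K c) (hS : #S ≤ K) (a : ι → ℝ≥0) :
    c * ∑ i ∈ S, (a i : ℝ) ≤ ∑ y ∈ S.biUnion N, (({i ∈ S | y ∈ N i}.sup a : ℝ≥0) : ℝ) := by
  suffices h : ∑ i ∈ S, c * (a i : ℝ) ≤
      ∑ y ∈ S.biUnion N, 1 * (({i ∈ S | y ∈ N i}.sup a : ℝ≥0) : ℝ) by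
    simpa only [mul_sum, one_mul] using h
  refine sum_mul_le_sum_mul_of_superlevel fun r ↦ ?_
  have h_level : {y ∈ S.biUnion N | r < {i ∈ S | y ∈ N i}.sup a} = {i ∈ S | r < a i}.biUnion N := by
    ext y
    simp only [mem_filter, mem_biUnion, Finset.lt_sup_iff]
    grind
  rw [h_level, sum_const, sum_const, nsmul_eq_mul, nsmul_eq_mul, mul_one, mul_comm]
  exact hN _ ((card_filter_le _ _).trans hS)

theorem mul_sum_norm_le_sum_norm_sum [SeminormedAddCommGroup E] (hN : IsVertexExpander N K c)
    (hD : ∀ i, (#(N i) : ℝ) ≤ D) (hS : #S ≤ K) (x : ι → E) :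
    (2 * c - D) * ∑ i ∈ S, ‖x i‖ ≤ ∑ y ∈ S.biUnion N, ‖∑ i ∈ S with y ∈ N i, x i‖ := by
  have h_max : c * ∑ i ∈ S, ‖x i‖ ≤
      ∑ y ∈ S.biUnion N, (({i ∈ S | y ∈ N i}.sup fun i ↦ ‖x i‖₊ : ℝ≥0) : ℝ) := by
    simpa using hN.mul_sum_le_sum_sup hS (‖x ·‖₊)
  have h_row := sum_le_sum fun y (_ : y ∈ S.biUnion N) ↦
    two_mul_sup_nnnorm_le_norm_sum_add_sum_norm (S.filter (y ∈ N ·)) x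
  have h_deg : ∑ y ∈ S.biUnion N, ∑ i ∈ S with y ∈ N i, ‖x i‖ ≤ D * ∑ i ∈ S, ‖x i‖ := by
    rw [sum_sum_filter_mem_eq_sum_card_inter_mul, mul_sum]
    refine sum_le_sum fun i _ ↦ mul_le_mul_of_nonneg_right (le_trans ?_ (hD i)) (norm_nonneg _)
    exact_mod_cast card_le_card inter_subset_left
  rw [← mul_sum, sum_add_distrib] at h_row
  linarith

theorem sum_card_inter_biUnion_le_of_card_le (hN : IsVertexExpander N K c)
    (hD : ∀ i, (#(N i) : ℝ) ≤ D) (hST : Disjoint S T) (hcard : #S + #T ≤ K) :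
    ∑ i ∈ T, (#(N i ∩ S.biUnion N) : ℝ) ≤ (D - c) * (#S + #T) := by
  have h_deg (A : Finset ι) : ∑ i ∈ A, (#(N i) : ℝ) ≤ D * #A := by
    simpa [mul_comm] using sum_le_card_nsmul A _ D fun i _ ↦ hD i
  have h_count : ∑ i ∈ T, (#(N i ∩ S.biUnion N) : ℝ) + #((S ∪ T).biUnion N) ≤
      #(S.biUnion N) + ∑ i ∈ T, (#(N i) : ℝ) := by
    rw [union_biUnion]
    exact_mod_cast sum_card_inter_add_card_union_biUnion_le N (S.biUnion N) T
  have h_S : (#(S.biUnion N) : ℝ) ≤ ∑ i ∈ S, (#(N i) : ℝ) := by exact_mod_cast card_biUnion_le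
  have h_exp := hN (S ∪ T) (by rwa [card_union_of_disjoint hST])
  rw [card_union_of_disjoint hST, Nat.cast_add] at h_exp
  linarith [h_deg S, h_deg T]

theorem sum_card_inter_biUnion_le (hN : IsVertexExpander N (2 * k) c)
    (hD : ∀ i, (#(N i) : ℝ) ≤ D) (hcD : c ≤ D) (hS : #S ≤ k) (hST : Disjoint S T) :
    ∑ i ∈ T, (#(N i ∩ S.biUnion N) : ℝ) ≤ (D - c) * (#S + 2 * #T) := by
  have hcD' : 0 ≤ D - c := sub_nonneg.2 hcD
  rcases S.eq_empty_or_nonempty with rfl | hS_nonempty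
  · simpa using mul_nonneg hcD' (by positivity : (0 : ℝ) ≤ 2 * #T)
  induction T using Finset.strongInduction with
  | H T ih =>
    rcases le_total #T #S with hTS | hTS
    · refine (hN.sum_card_inter_biUnion_le_of_card_le hD hST (by lia)).trans ?_
      gcongr
      linarith [(#T).cast_nonneg (α := ℝ)]
    · obtain ⟨A, hAT, hA⟩ := exists_subset_card_eq hTS
      have h_first := hN.sum_card_inter_biUnion_le_of_card_le hD (hST.mono_right hAT) (by lia)
      have h_rest := ih (T \ A)
        (sdiff_ssubset hAT (card_pos.1 (hA ▸ hS_nonempty.card_pos))) (hST.mono_right sdiff_subset)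
      rw [cast_card_sdiff hAT] at h_rest
      rw [← sum_sdiff hAT]
      rw [hA] at h_first h_rest
      linarith

end IsVertexExpander

theorem sum_norm_sum_filter_le_of_sum_eq_zero [Fintype ι] [DecidableEq ι] [DecidableEq V]
    [SeminormedAddCommGroup E] {N : ι → Finset V} {x : ι → E}
    (hx : ∀ y, ∑ i with y ∈ N i, x i = 0) (S : Finset ι) (U : Finset V) :
    ∑ y ∈ U, ‖∑ i ∈ S with y ∈ N i, x i‖ ≤ ∑ i ∈ Sᶜ, (#(N i ∩ U) : ℝ) * ‖x i‖ := by
  rw [← sum_sum_filter_mem_eq_sum_card_inter_mul]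
  refine sum_le_sum fun y _ ↦ ?_
  have h_split : ∑ i ∈ S with y ∈ N i, x i + ∑ i ∈ Sᶜ with y ∈ N i, x i = 0 := by
    rw [← hx y]
    simp only [sum_filter, sum_add_sum_compl]
  rw [eq_neg_of_add_eq_zero_left h_split, norm_neg]
  exact norm_sum_le _ _

theorem IsVertexExpander.mul_sum_norm_le_of_forall_norm_le [Fintype ι] [DecidableEq V]
    [SeminormedAddCommGroup E] {N : ι → Finset V} {c D : ℝ} {k : ℕ}
    (hN : IsVertexExpander N (2 * k) c) (hD : ∀ i, (#(N i) : ℝ) ≤ D) (hcD : c ≤ D) {x : ι → E}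
    (hx : ∀ y, ∑ i with y ∈ N i, x i = 0) {S : Finset ι} (hS : #S ≤ k)
    (h_top : ∀ i ∈ S, ∀ j ∉ S, ‖x j‖ ≤ ‖x i‖) :
    c * ∑ i ∈ S, ‖x i‖ ≤ 2 * (D - c) * ∑ i, ‖x i‖ := by
  have h_lower : (2 * c - D) * ∑ i ∈ S, ‖x i‖ ≤
      ∑ y ∈ S.biUnion N, ‖∑ i ∈ S with y ∈ N i, x i‖ :=
    hN.mul_sum_norm_le_sum_norm_sum hD (by lia) x
  have h_cancel := sum_norm_sum_filter_le_of_sum_eq_zero hx S (S.biUnion N)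
  have h_upper : ∑ i ∈ Sᶜ, (#(N i ∩ S.biUnion N) : ℝ) * ‖x i‖ ≤
      (D - c) * ∑ i ∈ S, ‖x i‖ + 2 * (D - c) * ∑ i ∈ Sᶜ, ‖x i‖ := by
    refine sum_mul_le_of_forall_subset_sum_le (a := fun i ↦ ‖x i‖₊) (sub_nonneg.2 hcD)
      (fun i hi j hj ↦ h_top i hi j (mem_compl.1 hj)) fun T hT ↦ ?_
    have h_edges := hN.sum_card_inter_biUnion_le hD hcD hS (disjoint_compl_right.mono_right hT)
    linarith
  rw [← sum_add_sum_compl S]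
  linarith

theorem stmt_17_general [Fintype ι] [DecidableEq V] [SeminormedAddCommGroup E]
    {N : ι → Finset V} {c D : ℝ} {k : ℕ} (hN : IsVertexExpander N (2 * k) c)
    (hD : ∀ i, (#(N i) : ℝ) ≤ D) (hcD : c ≤ D) {x : ι → E}
    (hx : ∀ y, ∑ i with y ∈ N i, x i = 0) {S : Finset ι} (hS : #S ≤ k) :
    c * ∑ i ∈ S, ‖x i‖ ≤ 2 * (D - c) * ∑ i, ‖x i‖ := by
  obtain ⟨T, hT, hST, h_top⟩ := exists_card_eq_sum_le_forall_le (‖x ·‖) S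
  have h_max := hN.mul_sum_norm_le_of_forall_norm_le hD hcD hx (hT.trans_le hS) h_top
  rcases le_total c 0 with hc | hc
  · refine (mul_nonpos_of_nonpos_of_nonneg hc (by positivity)).trans (mul_nonneg ?_ (by positivity))
    linarith
  · exact (mul_le_mul_of_nonneg_left hST hc).trans h_max

theorem biUnion_filter_univ [Fintype V] [DecidableEq V] (p : V → ι → Prop)
    [∀ i, DecidablePred (p · i)] (S : Finset ι) [DecidablePred fun y ↦ ∃ i ∈ S, p y i] :
    (S.biUnion fun i ↦ {y | p y i}) = ({y | ∃ i ∈ S, p y i} : Finset V) := by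
  ext y
  simp

theorem mulVec_apply_eq_sum_filter_eq_one [Fintype ι] [NonAssocSemiring R] [Nontrivial R]
    [DecidableEq R] {M : Matrix V ι R} {y : V} (h01 : ∀ i, M y i = 0 ∨ M y i = 1) (x : ι → R) :
    (M *ᵥ x) y = ∑ i with M y i = 1, x i := by
  rw [sum_filter]
  refine sum_congr rfl fun i _ ↦ ?_
  rcases h01 i with h | h <;> simp [h]

end

/-- ℓ₁ uncertainty principle for expander kernels: under 2k-expansion with
ε ∈ (0,1/5) and degree bound d(1+ε), any x with Mx = 0 satisfies
‖x_S‖₁ ≤ (4ε/(1-5ε))‖x‖₁ for all S with |S| ≤ k. -/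
theorem stmt_17 {m n : ℕ} (M : Matrix (Fin m) (Fin n) ℝ)
    (h01 : ∀ j i, M j i = 0 ∨ M j i = 1)
    (d ε : ℝ) (hd : 0 < d) (hε0 : 0 < ε) (hε1 : ε < 1/5) (k : ℕ)
    (hexp : ∀ S' : Finset (Fin n), S'.card ≤ 2*k →
      d * (1 - ε) * S'.card
        ≤ ((Finset.univ.filter (fun y : Fin m => ∃ i ∈ S', M y i = 1)).card : ℝ))
    (hdeg : ∀ i : Fin n,
      ((Finset.univ.filter (fun y : Fin m => M y i = 1)).card : ℝ) ≤ d * (1 + ε))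
    (x : Fin n → ℝ) (hx : M.mulVec x = 0)
    (S : Finset (Fin n)) (hS : S.card ≤ k) :
    ∑ i ∈ S, |x i| ≤ (4*ε / (1 - 5*ε)) * ∑ i, |x i| := by
  have hN : IsVertexExpander (fun i ↦ {y | M y i = 1}) (2 * k) (d * (1 - ε)) := fun S' hS' ↦ by
    simpa only [biUnion_filter_univ] using hexp S' hS'
  have hker (y : Fin m) : ∑ i with y ∈ ({y | M y i = 1} : Finset (Fin m)), x i = 0 := by
    simpa [mulVec_apply_eq_sum_filter_eq_one (h01 y)] using congrFun hx y
  have h := stmt_17_general hN hdeg (mul_le_mul_of_nonneg_left (by linarith) hd.le) hker hS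
  have h_S : 0 ≤ d * (ε * ∑ i ∈ S, |x i|) := by positivity
  simp only [Real.norm_eq_abs] at h
  rw [div_mul_eq_mul_div, le_div_iff₀ (by linarith)]
  exact le_of_mul_le_mul_left (by linarith) hd
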